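/- For a finite simple graph $G=(V,E)$ and $X\subseteq V$, let $N^\circ_G(X)$ denote the set of vertices outside $X$ that are adjacent to at least one vertex of $X$; a nonempty set $X\subseteq V$ is a connected set of $G$ if the induced subgraph $G[X]$ is connected. A leaf of a tree is a vertex of degree $1$ in the tree, and a subtree of $G$ is a subgraph of $G$ that is a tree. For a connected finite simple graph $G$, let $\ell(G)$ be the maximum number of leaves over all spanning trees of $G$. For every connected finite simple graph $G=(V,E)$ with $|V|\ge 1$, $\ell(G)$ equals the largest number $k$ such that $G$ has a subtree with $k$ leaves. If moreover $|V|\neq 2$, then $\ell(G)$ also equals the maximum of $|N^\circ_G(X)|$ over all connected sets $X$ of $G$. -/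

import Mathlib

/-- The set of leaves of a subgraph `T` of `G` (typically a tree): its vertices of degree 1
in `T`. -/
def leafSet {V : Type*} {G : SimpleGraph V} (T : G.Subgraph) : Set V :=
  {v | v ∈ T.verts ∧ (T.neighborSet v).ncard = 1}

/-- The number of leaves of a subgraph `T` of `G`. -/
noncomputable def leafCount {V : Type*} {G : SimpleGraph V} (T : G.Subgraph) : ℕ :=
  (leafSet T).ncard

/-- For a connected finite graph `G`: the maximum number of leaves over all spanning trees of `G`.
The set below is then nonempty and bounded, so that `sSup` is its maximum. -/
noncomputable def ell {V : Type*} (G : SimpleGraph V) : ℕ :=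
  sSup {k | ∃ T : G.Subgraph, T.IsSpanning ∧ T.coe.IsTree ∧ leafCount T = k}

/-- The closed neighborhood of a vertex. -/
def closedNbhd {V : Type*} (G : SimpleGraph V) (x : V) : Set V :=
  insert x (G.neighborSet x)

/-- The closed neighborhood `N_G(X)` of a set of vertices. -/
def closedNbhdSet {V : Type*} (G : SimpleGraph V) (X : Set V) : Set V :=
  ⋃ x ∈ X, closedNbhd G x

/-- The open neighborhood `N°_G(X) = N_G(X) \ X` of a set of vertices. -/
def openNbhdSet {V : Type*} (G : SimpleGraph V) (X : Set V) : Set V :=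
  closedNbhdSet G X \ X

/-- `X` is a connected set of `G`: it is nonempty and the induced subgraph `G[X]` is connected. -/
def IsConnSet {V : Type*} (G : SimpleGraph V) (X : Set V) : Prop :=
  X.Nonempty ∧ (G.induce X).Connected

/-!
Let `T` be a subtree of `G` and hang some outside neighbors of `T` on it as pendant vertices. The
result is again a subtree; all new vertices are leaves, and a leaf of `T` that ceases to be one has
received a new leaf as a child, so the number of leaves does not drop. Repeating this until all
vertices are used turns every subtree into a spanning tree with at least as many leaves. Hanging
all of `N°(X)` on a spanning tree of `G[X]` gives a subtree with at least `|N°(X)|` leaves.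
Conversely, the non-leaves of a spanning tree form a connected set whose open neighborhood is the
set of leaves; this fails only if two leaves are adjacent, and then the tree is a single edge.
-/

open SimpleGraph

section Graph

variable {V : Type*} {G : SimpleGraph V} {s : Set V}

theorem isAcyclic_of_isAcyclic_induce (h : (G.induce s).IsAcyclic)
    (hs : ∀ v ∉ s, (G.neighborSet v).Subsingleton) : G.IsAcyclic := by
  intro v c hc
  have support_subset : ∀ w ∈ c.support, w ∈ s := by
    intro w hw
    by_contra hws
    have ncard_eq_two := hc.ncard_neighborSet_toSubgraph_eq_two hw
    have nontrivial : (c.toSubgraph.neighborSet w).Nontrivial :=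
      (Set.one_lt_ncard_iff_nontrivial_and_finite.1 (ncard_eq_two ▸ one_lt_two)).1
    exact (nontrivial.mono (c.toSubgraph.neighborSet_subset w)).not_subsingleton (hs w hws)
  refine h (c.induce s support_subset) (.of_map (f := (Embedding.induce s).toHom) ?_)
  rwa [Walk.map_induce]

theorem connected_of_connected_induce (h : (G.induce s).Connected)
    (hs : ∀ v ∉ s, ∃ w ∈ s, G.Adj v w) : G.Connected := by
  obtain ⟨u⟩ := h.nonempty
  have reachable_of_mem (v : V) (hv : v ∈ s) : G.Reachable u v :=
    (h.preconnected u ⟨v, hv⟩).map (Embedding.induce s).toHom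
  refine connected_iff_exists_forall_reachable _ |>.2 ⟨u, fun v ↦ ?_⟩
  by_cases hv : v ∈ s
  · exact reachable_of_mem v hv
  · obtain ⟨w, hw, hvw⟩ := hs v hv
    exact (reachable_of_mem w hw).trans hvw.symm.reachable

theorem isTree_of_isTree_induce (h : (G.induce s).IsTree)
    (hs : ∀ v ∉ s, ∃ w ∈ s, G.neighborSet v = {w}) : G.IsTree where
  connected := connected_of_connected_induce h.connected fun v hv ↦ by
    obtain ⟨w, hw, hvw⟩ := hs v hv
    exact ⟨w, hw, G.mem_neighborSet v w |>.1 (hvw ▸ rfl)⟩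
  isAcyclic := isAcyclic_of_isAcyclic_induce h.isAcyclic fun v hv ↦ by
    obtain ⟨w, -, hvw⟩ := hs v hv
    exact hvw ▸ Set.subsingleton_singleton

theorem exists_isTree_verts_eq (hs : (G.induce s).Connected) :
    ∃ T : G.Subgraph, T.coe.IsTree ∧ T.verts = s := by
  obtain ⟨F, hF, hFtree⟩ := hs.exists_isTree_le
  have hle : F.spanningCoe ≤ G := map_le_iff_le_comap _ _ _ |>.2 hF
  have coe_eq : ((toSubgraph F.spanningCoe hle).induce s).coe = F := by
    ext a b
    simp only [Subgraph.coe_adj, Subgraph.induce_adj, toSubgraph_adj, map_adj,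
      Function.Embedding.subtype_apply, Subtype.exists, exists_and_right, exists_eq_right_right,
      exists_eq_right]
    exact ⟨fun ⟨_, _, _, _, h⟩ ↦ h, fun h ↦ ⟨a.2, b.2, a.2, b.2, h⟩⟩
  exact ⟨_, coe_eq ▸ hFtree, rfl⟩

theorem mem_openNbhdSet_iff {v : V} : v ∈ openNbhdSet G s ↔ v ∉ s ∧ ∃ u ∈ s, G.Adj u v := by
  simp only [openNbhdSet, closedNbhdSet, closedNbhd, Set.mem_sdiff, Set.mem_iUnion,
    Set.mem_insert_iff, mem_neighborSet, exists_prop]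
  grind

theorem openNbhdSet_nonempty (hG : G.Preconnected) (hs : s.Nonempty) (hne : s ≠ Set.univ) :
    (openNbhdSet G s).Nonempty := by
  obtain ⟨x, hx⟩ := hs
  obtain ⟨y, hy⟩ := (Set.ne_univ_iff_exists_notMem s).1 hne
  obtain ⟨p⟩ := hG x y
  obtain ⟨d, -, hfst, hsnd⟩ := p.exists_boundary_dart s hx hy
  exact ⟨d.snd, mem_openNbhdSet_iff.2 ⟨hsnd, d.fst, hfst, d.adj⟩⟩

end Graph

section Leaves

variable {V : Type*} {G : SimpleGraph V} {T : G.Subgraph} {v w : V}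

theorem mem_leafSet_iff_existsUnique_adj : v ∈ leafSet T ↔ ∃! w, T.Adj v w := by
  have ncard_eq_one_iff : (T.neighborSet v).ncard = 1 ↔ ∃! w, T.Adj v w := by
    simp [Set.ncard_eq_one, Set.ext_iff, ExistsUnique, iff_def, forall_and, and_comm]
  refine ⟨fun hv ↦ ncard_eq_one_iff.1 hv.2, fun hv ↦ ⟨?_, ncard_eq_one_iff.2 hv⟩⟩
  obtain ⟨w, hvw, -⟩ := hv
  exact hvw.fst_mem

theorem verts_eq_pair_of_adj_of_mem_leafSet (hT : T.Preconnected) (hvw : T.Adj v w)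
    (hv : v ∈ leafSet T) (hw : w ∈ leafSet T) : T.verts = {v, w} := by
  have eq_w {z : V} (hvz : T.Adj v z) : z = w :=
    (mem_leafSet_iff_existsUnique_adj.1 hv).unique hvz hvw
  have eq_v {z : V} (hwz : T.Adj w z) : z = v :=
    (mem_leafSet_iff_existsUnique_adj.1 hw).unique hwz hvw.symm
  refine (Set.pair_subset hvw.fst_mem hvw.snd_mem).antisymm' fun z hz ↦ ?_
  by_contra hzvw
  obtain ⟨p⟩ := hT.coe ⟨v, hvw.fst_mem⟩ ⟨z, hz⟩
  obtain ⟨d, -, hfst, hsnd⟩ := p.exists_boundary_dart (Subtype.val ⁻¹' {v, w}) (by simp) hzvw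
  have hadj : T.Adj d.fst d.snd := d.adj
  rcases hfst with hfst | hfst <;> rw [hfst] at hadj
  · exact hsnd (.inr (eq_w hadj))
  · exact hsnd (.inl (eq_v hadj))

theorem notMem_leafSet_of_adj_of_mem_leafSet (hT : T.Preconnected) (hcard : T.verts.ncard ≠ 2)
    (hvw : T.Adj v w) (hv : v ∈ leafSet T) : w ∉ leafSet T := by
  intro hw
  rw [verts_eq_pair_of_adj_of_mem_leafSet hT hvw hv hw] at hcard
  exact hcard (Set.ncard_pair hvw.ne)

theorem leafSet_subset_openNbhdSet (hT : T.Preconnected) (hcard : T.verts.ncard ≠ 2) :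
    leafSet T ⊆ openNbhdSet G (T.verts \ leafSet T) := by
  intro v hv
  obtain ⟨w, hvw, -⟩ := mem_leafSet_iff_existsUnique_adj.1 hv
  have hw := notMem_leafSet_of_adj_of_mem_leafSet hT hcard hvw hv
  exact mem_openNbhdSet_iff.2 ⟨fun h ↦ h.2 hv, w, ⟨hvw.snd_mem, hw⟩, hvw.adj_sub.symm⟩

theorem openNbhdSet_verts_diff_leafSet (hT : T.Preconnected) (hcard : T.verts.ncard ≠ 2)
    (hspan : T.IsSpanning) : openNbhdSet G (T.verts \ leafSet T) = leafSet T := by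
  refine (leafSet_subset_openNbhdSet hT hcard).antisymm' fun v hv ↦ ?_
  by_contra hleaf
  exact (mem_openNbhdSet_iff.1 hv).1 ⟨hspan v, hleaf⟩

theorem preconnected_induce_verts_diff_leafSet (hT : T.Preconnected) :
    (G.induce (T.verts \ leafSet T)).Preconnected := by
  have hcoe : (T.coe.induce (Subtype.val ⁻¹' (leafSet T)ᶜ)).Preconnected := by
    refine hT.coe.induce_of_degree_eq_one fun v hv a ha b hb ↦ Subtype.ext ?_
    exact (mem_leafSet_iff_existsUnique_adj.1 (not_not.1 hv)).unique ha hb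
  let f : T.coe.induce (Subtype.val ⁻¹' (leafSet T)ᶜ) →g G.induce (T.verts \ leafSet T) :=
    ⟨fun x ↦ ⟨x.1.1, x.1.2, x.2⟩, fun h ↦ T.adj_sub h⟩
  exact hcoe.map f fun y ↦ ⟨⟨⟨y.1, y.2.1⟩, y.2.2⟩, rfl⟩

theorem isConnSet_verts_diff_leafSet (hT : T.Connected) (hcard : T.verts.ncard ≠ 2) :
    IsConnSet G (T.verts \ leafSet T) := by
  have nonempty : (T.verts \ leafSet T).Nonempty := by
    obtain ⟨v, hv⟩ := hT.nonempty
    by_cases hleaf : v ∈ leafSet T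
    · obtain ⟨-, w, hw, -⟩ :=
        mem_openNbhdSet_iff.1 (leafSet_subset_openNbhdSet hT.preconnected hcard hleaf)
      exact ⟨w, hw⟩
    · exact ⟨v, hv, hleaf⟩
  have := nonempty.to_subtype
  exact ⟨nonempty, ⟨preconnected_induce_verts_diff_leafSet hT.preconnected⟩⟩

end Leaves

section Pendants

variable {V : Type*} {G : SimpleGraph V} {T : G.Subgraph} {S : Set V} {parent : S → T.verts}

/-- The subgraph obtained from `T` by hanging every vertex `s` of `S` on the vertex `parent s` of
`T` by an edge. The new edges are pendant if `S` is disjoint from the vertices of `T`. -/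
def attachPendants (T : G.Subgraph) {S : Set V} (parent : S → T.verts)
    (hadj : ∀ s : S, G.Adj (parent s) s) : G.Subgraph :=
  T ⊔ ⨆ s : S, G.subgraphOfAdj (hadj s)

theorem verts_attachPendants (hadj : ∀ s : S, G.Adj (parent s) s) :
    (attachPendants T parent hadj).verts = T.verts ∪ S := by
  ext x
  simp only [attachPendants, Subgraph.verts_sup, Subgraph.verts_iSup, subgraphOfAdj_verts,
    Set.mem_union, Set.mem_iUnion, Set.mem_insert_iff, Set.mem_singleton_iff]
  constructor
  · rintro (hx | ⟨s, rfl | rfl⟩)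
    exacts [.inl hx, .inl (parent s).2, .inr s.2]
  · rintro (hx | hx)
    exacts [.inl hx, .inr ⟨⟨x, hx⟩, .inr rfl⟩]

theorem attachPendants_adj_iff (hadj : ∀ s : S, G.Adj (parent s) s) {a b : V} :
    (attachPendants T parent hadj).Adj a b ↔
      T.Adj a b ∨ ∃ s : S, (parent s = a ∧ s = b) ∨ (parent s = b ∧ s = a) := by
  simp [attachPendants]

theorem attachPendants_adj_iff_of_mem (hST : Disjoint S T.verts)
    (hadj : ∀ s : S, G.Adj (parent s) s) (s : S) {x : V} :
    (attachPendants T parent hadj).Adj s x ↔ x = parent s := by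
  have hsT : (s : V) ∉ T.verts := Set.disjoint_left.1 hST s.2
  rw [attachPendants_adj_iff]
  constructor
  · rintro (h | ⟨t, ⟨hts, -⟩ | ⟨hx, hts⟩⟩)
    · exact absurd h.fst_mem hsT
    · exact absurd (hts ▸ (parent t).2) hsT
    · rw [← hx, Subtype.ext hts]
  · rintro rfl
    exact .inr ⟨s, .inr ⟨rfl, rfl⟩⟩

theorem attachPendants_adj_iff_of_mem_verts (hST : Disjoint S T.verts)
    (hadj : ∀ s : S, G.Adj (parent s) s) {a b : V} (ha : a ∈ T.verts) (hb : b ∈ T.verts) :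
    (attachPendants T parent hadj).Adj a b ↔ T.Adj a b := by
  have ne_of_mem {c : V} (hc : c ∈ T.verts) (s : S) : (s : V) ≠ c :=
    fun hsc ↦ Set.disjoint_left.1 hST s.2 (hsc ▸ hc)
  simp [attachPendants_adj_iff, ne_of_mem ha, ne_of_mem hb]

theorem attachPendants_adj_iff_of_ne_parent (hST : Disjoint S T.verts)
    (hadj : ∀ s : S, G.Adj (parent s) s) {a b : V} (ha : a ∈ T.verts)
    (hparent : ∀ s, (parent s : V) ≠ a) :
    (attachPendants T parent hadj).Adj a b ↔ T.Adj a b := by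
  have ne_of_mem (s : S) : (s : V) ≠ a := fun hsa ↦ Set.disjoint_left.1 hST s.2 (hsa ▸ ha)
  simp [attachPendants_adj_iff, ne_of_mem, hparent]

theorem isTree_attachPendants (hT : T.coe.IsTree) (hST : Disjoint S T.verts)
    (hadj : ∀ s : S, G.Adj (parent s) s) : (attachPendants T parent hadj).coe.IsTree := by
  have hverts (v : V) : v ∈ (attachPendants T parent hadj).verts ↔ v ∈ T.verts ∨ v ∈ S := by
    rw [verts_attachPendants, Set.mem_union]
  let iso : (attachPendants T parent hadj).coe.induce (Subtype.val ⁻¹' T.verts) ≃g T.coe :=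
    { toFun x := ⟨x.1, x.2⟩
      invFun y := ⟨⟨y, hverts y |>.2 (.inl y.2)⟩, y.2⟩
      map_rel_iff' {a b} := (attachPendants_adj_iff_of_mem_verts hST hadj a.2 b.2).symm }
  refine isTree_of_isTree_induce (iso.isTree_iff.2 hT) fun v hv ↦ ?_
  have hvS : (v : V) ∈ S := (hverts v |>.1 v.2).resolve_left hv
  refine ⟨⟨parent ⟨v, hvS⟩, hverts _ |>.2 (.inl (parent _).2)⟩, (parent _).2, ?_⟩
  ext x
  exact (attachPendants_adj_iff_of_mem hST hadj ⟨v, hvS⟩).trans (by simp [Subtype.ext_iff])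

theorem subset_leafSet_attachPendants (hST : Disjoint S T.verts)
    (hadj : ∀ s : S, G.Adj (parent s) s) : S ⊆ leafSet (attachPendants T parent hadj) := by
  intro s hs
  simp [mem_leafSet_iff_existsUnique_adj, attachPendants_adj_iff_of_mem hST hadj ⟨s, hs⟩]

theorem leafSet_diff_range_subset_leafSet_attachPendants (hST : Disjoint S T.verts)
    (hadj : ∀ s : S, G.Adj (parent s) s) :
    leafSet T \ Set.range (fun s ↦ (parent s : V)) ⊆ leafSet (attachPendants T parent hadj) := by
  rintro v ⟨hv, hparent⟩
  have hparent' (s : S) : (parent s : V) ≠ v := fun h ↦ hparent ⟨s, h⟩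
  simpa only [mem_leafSet_iff_existsUnique_adj,
    attachPendants_adj_iff_of_ne_parent hST hadj hv.1 hparent'] using hv

theorem encard_leafSet_le_encard_leafSet_attachPendants
    (hST : Disjoint S T.verts) (hadj : ∀ s : S, G.Adj (parent s) s) :
    (leafSet T).encard ≤ (leafSet (attachPendants T parent hadj)).encard := by
  set R := Set.range (fun s ↦ (parent s : V))
  have hdisj : Disjoint (leafSet T \ R) S := hST.symm.mono_left fun v hv ↦ hv.1.1
  have hR : R.encard ≤ S.encard := by
    simpa only [R, Set.image_univ, Set.encard_univ, ENat.card_coe_set_eq] using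
      Set.encard_image_le (fun s ↦ (parent s : V)) Set.univ
  calc
    (leafSet T).encard ≤ (leafSet T \ R ∪ R).encard := Set.encard_le_encard (by simp)
    _ ≤ (leafSet T \ R).encard + R.encard := Set.encard_union_le _ _
    _ ≤ (leafSet T \ R).encard + S.encard := add_le_add_right hR _
    _ = (leafSet T \ R ∪ S).encard := (Set.encard_union_eq hdisj).symm
    _ ≤ (leafSet (attachPendants T parent hadj)).encard :=
      Set.encard_le_encard <| Set.union_subset
        (leafSet_diff_range_subset_leafSet_attachPendants hST hadj)
        (subset_leafSet_attachPendants hST hadj)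

end Pendants

section SpanningTrees

variable {V : Type*} {G : SimpleGraph V} {T : G.Subgraph}

theorem exists_isTree_verts_eq_union (hT : T.coe.IsTree) {S : Set V}
    (hS : S ⊆ openNbhdSet G T.verts) :
    ∃ T' : G.Subgraph, T'.coe.IsTree ∧ T'.verts = T.verts ∪ S ∧ S ⊆ leafSet T' ∧
      (leafSet T).encard ≤ (leafSet T').encard := by
  have hST : Disjoint S T.verts :=
    Set.disjoint_left.2 fun v hv ↦ (mem_openNbhdSet_iff.1 (hS hv)).1
  have exists_parent (s : S) : ∃ u : T.verts, G.Adj u s := by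
    obtain ⟨u, hu, hus⟩ := (mem_openNbhdSet_iff.1 (hS s.2)).2
    exact ⟨⟨u, hu⟩, hus⟩
  choose parent hadj using exists_parent
  exact ⟨attachPendants T parent hadj, isTree_attachPendants hT hST hadj,
    verts_attachPendants hadj, subset_leafSet_attachPendants hST hadj,
    encard_leafSet_le_encard_leafSet_attachPendants hST hadj⟩

theorem exists_isSpanning_isTree_encard_leafSet_le (hG : G.Preconnected) (hT : T.coe.IsTree)
    (hfin : T.vertsᶜ.Finite) :
    ∃ T' : G.Subgraph, T'.IsSpanning ∧ T'.coe.IsTree ∧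
      (leafSet T).encard ≤ (leafSet T').encard := by
  induction hn : T.vertsᶜ.ncard using Nat.strong_induction_on generalizing T with
  | _ n ih =>
    by_cases hspan : T.verts = Set.univ
    · exact ⟨T, Subgraph.isSpanning_iff.2 hspan, hT, le_rfl⟩
    have hne : T.verts.Nonempty := Set.nonempty_coe_sort.1 hT.connected.nonempty
    obtain ⟨v, hv⟩ := openNbhdSet_nonempty hG hne hspan
    obtain ⟨T₁, hT₁, hverts, -, hle₁⟩ := exists_isTree_verts_eq_union hT subset_rfl
    have hlt : T.verts < T₁.verts :=
      hverts ▸ ⟨Set.subset_union_left, fun h ↦ (mem_openNbhdSet_iff.1 hv).1 (h (.inr hv))⟩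
    have hssub : T₁.vertsᶜ ⊂ T.vertsᶜ := compl_lt_compl_iff_lt.2 hlt
    obtain ⟨T₂, hspan₂, hT₂, hle₂⟩ :=
      ih _ (hn ▸ Set.ncard_lt_ncard hssub hfin) hT₁ (hfin.subset hssub.subset) rfl
    exact ⟨T₂, hspan₂, hT₂, hle₁.trans hle₂⟩

variable [Finite V]

theorem isGreatest_ell (hG : G.Connected) :
    IsGreatest {k | ∃ T : G.Subgraph, T.IsSpanning ∧ T.coe.IsTree ∧ leafCount T = k} (ell G) := by
  have hbdd : BddAbove
      {k | ∃ T : G.Subgraph, T.IsSpanning ∧ T.coe.IsTree ∧ leafCount T = k} := by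
    refine ⟨Nat.card V, ?_⟩
    rintro _ ⟨T, -, -, rfl⟩
    exact Set.ncard_le_card _
  refine ⟨Nat.sSup_mem ?_ hbdd, fun k hk ↦ le_csSup hbdd hk⟩
  obtain ⟨v⟩ := hG.nonempty
  obtain ⟨T, hspan, hT, -⟩ := exists_isSpanning_isTree_encard_leafSet_le hG.preconnected
    (IsTree.coe_singletonSubgraph G v) (Set.toFinite _)
  exact ⟨_, T, hspan, hT, rfl⟩

theorem leafCount_le_ell (hG : G.Connected) (hT : T.coe.IsTree) : leafCount T ≤ ell G := by
  obtain ⟨T', hspan, hT', hle⟩ :=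
    exists_isSpanning_isTree_encard_leafSet_le hG.preconnected hT (Set.toFinite _)
  calc
    leafCount T ≤ leafCount T' := ENat.toNat_le_toNat hle (Set.toFinite _).encard_lt_top.ne
    _ ≤ ell G := (isGreatest_ell hG).2 ⟨T', hspan, hT', rfl⟩

theorem ncard_openNbhdSet_le_ell (hG : G.Connected) {X : Set V} (hX : (G.induce X).Connected) :
    (openNbhdSet G X).ncard ≤ ell G := by
  obtain ⟨T, hT, rfl⟩ := exists_isTree_verts_eq hX
  obtain ⟨T', hT', -, hleaf, -⟩ := exists_isTree_verts_eq_union hT subset_rfl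
  exact (Set.ncard_le_ncard hleaf).trans (leafCount_le_ell hG hT')

end SpanningTrees

/-- For every connected finite simple graph `G`, `ℓ(G)` is the largest number `k` such that `G`
has a subtree with `k` leaves; and, unless `G` is the graph on two vertices, `ℓ(G)` is also the
maximum of `|N°_G(X)|` over the connected sets `X` of `G`. -/
theorem ell_characterizations {V : Type*} [Fintype V] (G : SimpleGraph V) (hG : G.Connected) :
    IsGreatest {k : ℕ | ∃ T : G.Subgraph, T.coe.IsTree ∧ leafCount T = k} (ell G) ∧
    (Fintype.card V ≠ 2 →
      IsGreatest {k : ℕ | ∃ X : Set V, IsConnSet G X ∧ (openNbhdSet G X).ncard = k} (ell G)) := by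
  obtain ⟨T, hspan, hT, hcount⟩ := (isGreatest_ell hG).1
  refine ⟨⟨⟨T, hT, hcount⟩, ?_⟩, fun hcard ↦ ⟨?_, ?_⟩⟩
  · rintro _ ⟨T', hT', rfl⟩
    exact leafCount_le_ell hG hT'
  · have hconn : T.Connected := ⟨hT.connected⟩
    have hcard' : T.verts.ncard ≠ 2 := by
      rwa [hspan.verts_eq_univ, Set.ncard_univ, Nat.card_eq_fintype_card]
    refine ⟨T.verts \ leafSet T, isConnSet_verts_diff_leafSet hconn hcard', ?_⟩
    rwa [openNbhdSet_verts_diff_leafSet hconn.preconnected hcard' hspan]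
  · rintro _ ⟨X, hX, rfl⟩
    exact ncard_openNbhdSet_le_ell hG hX.2
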